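/- Let f : A → B be a graph morphism between multigraphs such that f_P is surjective on part sets, let q : A → I be the coequalizer in Grphs of the kernel pair of f, and let q* : I* → B be the equalizer of the cokernel pair of f, with h : I → I* the unique morphism satisfying q* ∘ h ∘ q = f. Then the composite q* ∘ h : I → B is an isomorphism in Grphs; in particular, when f is an epimorphism, B is isomorphic to the coequalizer I of the kernel pair of f. -/

import Mathlib

/-- A multigraph: a vertex type, an edge type, and an incidence function
assigning to each edge an unordered pair of vertices. -/
structure Multigraph : Type 1 where
  V : Type
  E : Type
  ψ : E → Sym2 V

namespace Multigraph

/-- The part set of a multigraph: vertices together with edges. -/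
abbrev Part (G : Multigraph) : Type := G.V ⊕ G.E

/-- The incidence function extended to parts: a vertex `v` is incident to `{v,v}`. -/
def incid (G : Multigraph) : G.Part → Sym2 G.V
  | Sum.inl v => s(v, v)
  | Sum.inr e => G.ψ e

/-- A graph morphism: a function on part sets mapping vertices to vertices and
preserving incidence.  (The vertex map is recorded separately, but it is uniquely
determined by the part map.) -/
@[ext]
structure Hom (G H : Multigraph) where
  partMap : G.Part → H.Part
  vertMap : G.V → H.V
  partMap_vert : ∀ v : G.V, partMap (Sum.inl v) = Sum.inl (vertMap v)
  incid_partMap : ∀ p : G.Part, H.incid (partMap p) = (G.incid p).map vertMap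

/-- The identity graph morphism. -/
def Hom.id (G : Multigraph) : Hom G G where
  partMap := _root_.id
  vertMap := _root_.id
  partMap_vert := fun _ => rfl
  incid_partMap := fun p => by simp

/-- Composition of graph morphisms. -/
def Hom.comp {G H K : Multigraph} (g : Hom H K) (f : Hom G H) : Hom G K where
  partMap := g.partMap ∘ f.partMap
  vertMap := g.vertMap ∘ f.vertMap
  partMap_vert := fun v => by simp [f.partMap_vert, g.partMap_vert]
  incid_partMap := fun p => by
    simp [Function.comp, g.incid_partMap, f.incid_partMap, Sym2.map_map]

/-- A strict graph morphism: a graph morphism that moreover maps edges to edges. -/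
@[ext]
structure StrictHom (G H : Multigraph) extends Hom G H where
  edgeMap : G.E → H.E
  partMap_edge : ∀ e : G.E, partMap (Sum.inr e) = Sum.inr (edgeMap e)

/-- The identity strict graph morphism. -/
def StrictHom.id (G : Multigraph) : StrictHom G G where
  toHom := Hom.id G
  edgeMap := _root_.id
  partMap_edge := fun _ => rfl

/-- Composition of strict graph morphisms. -/
def StrictHom.comp {G H K : Multigraph} (g : StrictHom H K) (f : StrictHom G H) :
    StrictHom G K where
  toHom := g.toHom.comp f.toHom
  edgeMap := g.edgeMap ∘ f.edgeMap
  partMap_edge := fun e => by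
    simp [Hom.comp, f.partMap_edge, g.partMap_edge]

end Multigraph

namespace Multigraph

/-- The graph with two vertices joined by one edge. -/
def edgeGraph : Multigraph where
  V := Bool
  E := Unit
  ψ := fun _ => s(false, true)

/-- A part with given ends is the image of the edge of `edgeGraph`. -/
def edgeHom (A : Multigraph) (p : A.Part) (x y : A.V) (hp : A.incid p = s(x, y)) :
    Hom edgeGraph A where
  partMap := fun r => match r with
    | Sum.inl b => Sum.inl (bif b then y else x)
    | Sum.inr _ => p
  vertMap := fun b => bif b then y else x
  partMap_vert := fun _ => rfl
  incid_partMap := fun r => by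
    rcases r with b | e
    · rfl
    · exact hp

theorem Hom.ext_part {G H : Multigraph} {a b : Hom G H}
    (hab : ∀ p, a.partMap p = b.partMap p) : a = b := by
  apply Hom.ext
  · exact funext hab
  · funext v
    have := hab (Sum.inl v)
    rw [a.partMap_vert, b.partMap_vert] at this
    exact Sum.inl.inj this

theorem Hom.vert_surj {A B : Multigraph} (f : Hom A B)
    (hf : Function.Surjective f.partMap) : Function.Surjective f.vertMap := by
  intro v
  obtain ⟨p, hp⟩ := hf (Sum.inl v)
  have h1 := f.incid_partMap p
  rw [hp] at h1
  have hv : v ∈ (A.incid p).map f.vertMap := by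
    rw [← h1]
    exact Sym2.mem_mk_left v v
  obtain ⟨x, _, hx⟩ := Sym2.mem_map.1 hv
  exact ⟨x, hx⟩

theorem merge_aux {A B I R : Multigraph} (f : Hom A B) (p0 p1 : Hom R A)
    (hkerUniv : ∀ (X : Multigraph) (a b : Hom X A), f.comp a = f.comp b →
      ∃! t : Hom X R, p0.comp t = a ∧ p1.comp t = b)
    (q : Hom A I) (hq : q.comp p0 = q.comp p1)
    (p p' : A.Part) (x y x' y' : A.V) (hp : A.incid p = s(x, y))
    (hp' : A.incid p' = s(x', y')) (hpp : f.partMap p = f.partMap p')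
    (hx : f.vertMap x = f.vertMap x') (hy : f.vertMap y = f.vertMap y') :
    q.partMap p = q.partMap p' := by
  obtain ⟨t, ⟨h0, h1⟩, _⟩ := hkerUniv edgeGraph (edgeHom A p x y hp) (edgeHom A p' x' y' hp') (by
    apply Hom.ext_part
    rintro (b | e)
    · cases b
      · change f.partMap (Sum.inl x) = f.partMap (Sum.inl x')
        rw [f.partMap_vert, f.partMap_vert, hx]
      · change f.partMap (Sum.inl y) = f.partMap (Sum.inl y')
        rw [f.partMap_vert, f.partMap_vert, hy]
    · exact hpp)
  have e0 : p0.partMap (t.partMap (Sum.inr ())) = p :=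
    congrArg (fun k : Hom edgeGraph A => k.partMap (Sum.inr ())) h0
  have e1 : p1.partMap (t.partMap (Sum.inr ())) = p' :=
    congrArg (fun k : Hom edgeGraph A => k.partMap (Sum.inr ())) h1
  have e2 : q.partMap (p0.partMap (t.partMap (Sum.inr ()))) =
      q.partMap (p1.partMap (t.partMap (Sum.inr ()))) :=
    congrArg (fun k : Hom R I => k.partMap (t.partMap (Sum.inr ()))) hq
  rwa [e0, e1] at e2

theorem merge {A B I R : Multigraph} (f : Hom A B) (p0 p1 : Hom R A)
    (hkerUniv : ∀ (X : Multigraph) (a b : Hom X A), f.comp a = f.comp b →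
      ∃! t : Hom X R, p0.comp t = a ∧ p1.comp t = b)
    (q : Hom A I) (hq : q.comp p0 = q.comp p1)
    (p p' : A.Part) (hpp : f.partMap p = f.partMap p') :
    q.partMap p = q.partMap p' := by
  obtain ⟨⟨x, y⟩, hp⟩ := Sym2.mk_surjective (A.incid p)
  obtain ⟨⟨x', y'⟩, hp'⟩ := Sym2.mk_surjective (A.incid p')
  have h1 := f.incid_partMap p
  rw [hpp, f.incid_partMap p', ← hp, ← hp'] at h1
  change s(f.vertMap x', f.vertMap y') = s(f.vertMap x, f.vertMap y) at h1
  rcases Sym2.eq_iff.1 h1 with ⟨hx, hy⟩ | ⟨hx, hy⟩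
  · exact merge_aux f p0 p1 hkerUniv q hq p p' x y x' y' hp.symm hp'.symm hpp hx.symm hy.symm
  · exact merge_aux f p0 p1 hkerUniv q hq p p' x y y' x' hp.symm
      (hp'.symm.trans Sym2.eq_swap) hpp hy.symm hx.symm

/-- A morphism constant on the fibres of a surjective morphism factors through it. -/
theorem exists_factor {A B I : Multigraph} (f : Hom A B)
    (hf : Function.Surjective f.partMap) (q : Hom A I)
    (hm : ∀ p p', f.partMap p = f.partMap p' → q.partMap p = q.partMap p') :
    ∃ g : Hom B I, g.comp f = q := by
  obtain ⟨s, hs⟩ := hf.hasRightInverse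
  obtain ⟨sv, hsv⟩ := (f.vert_surj hf).hasRightInverse
  have hv : ∀ v, q.vertMap (sv (f.vertMap v)) = q.vertMap v := by
    intro v
    have := hm (Sum.inl (sv (f.vertMap v))) (Sum.inl v) (by
      rw [f.partMap_vert, f.partMap_vert, hsv])
    rw [q.partMap_vert, q.partMap_vert] at this
    exact Sum.inl.inj this
  refine ⟨⟨fun b => q.partMap (s b), fun v => q.vertMap (sv v), ?_, ?_⟩, ?_⟩
  · intro v
    rw [← q.partMap_vert]
    apply hm
    rw [hs, f.partMap_vert, hsv]
  · intro b
    have h1 := f.incid_partMap (s b)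
    rw [hs] at h1
    rw [q.incid_partMap, h1, Sym2.map_map]
    congr 1
    funext v
    exact (hv v).symm
  · apply Hom.ext_part
    intro p
    exact hm _ _ (hs _)

end Multigraph

open Multigraph in
/-- If `f : A → B` is a graph morphism that is surjective on part sets (i.e. an
epimorphism in **Grphs**), `q : A → I` is a coequalizer of the kernel pair of `f`,
`q* : I* → B` is an equalizer of the cokernel pair of `f`, and `h : I → I*` is the
unique morphism with `q* ∘ h ∘ q = f`, then `q* ∘ h : I → B` is an isomorphism;
in particular `B` is isomorphic to the coequalizer `I` of the kernel pair of `f`. -/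
theorem epi_iso_coequalizer_of_kernelPair
    (A B : Multigraph) (f : Hom A B)
    (hf : Function.Surjective f.partMap)
    -- the kernel pair of f : a pullback of f along itself
    (R : Multigraph) (p0 p1 : Hom R A)
    (hker : f.comp p0 = f.comp p1)
    (hkerUniv : ∀ (X : Multigraph) (a b : Hom X A), f.comp a = f.comp b →
      ∃! t : Hom X R, p0.comp t = a ∧ p1.comp t = b)
    -- q : A → I, a coequalizer of the kernel pair
    (I : Multigraph) (q : Hom A I)
    (hq : q.comp p0 = q.comp p1)
    (hqUniv : ∀ (X : Multigraph) (m : Hom A X), m.comp p0 = m.comp p1 →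
      ∃! t : Hom I X, t.comp q = m)
    -- the cokernel pair of f : a pushout of f along itself
    (C : Multigraph) (i0 i1 : Hom B C)
    (hcoker : i0.comp f = i1.comp f)
    (hcokerUniv : ∀ (X : Multigraph) (j0 j1 : Hom B X), j0.comp f = j1.comp f →
      ∃! t : Hom C X, t.comp i0 = j0 ∧ t.comp i1 = j1)
    -- q* : I* → B, an equalizer of the cokernel pair
    (Istar : Multigraph) (qstar : Hom Istar B)
    (hqs : i0.comp qstar = i1.comp qstar)
    (hqsUniv : ∀ (X : Multigraph) (m : Hom X B), i0.comp m = i1.comp m →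
      ∃! t : Hom X Istar, qstar.comp t = m)
    -- the unique comparison morphism h with q* ∘ h ∘ q = f
    (h : Hom I Istar)
    (hcomm : qstar.comp (h.comp q) = f) :
    ∃ g : Hom B I,
      g.comp (qstar.comp h) = Hom.id I ∧ (qstar.comp h).comp g = Hom.id B := by
  obtain ⟨g, hg⟩ := exists_factor f hf q (merge f p0 p1 hkerUniv q hq)
  refine ⟨g, ?_, ?_⟩
  · obtain ⟨t, _, ht⟩ := hqUniv I q hq
    have e1 : (g.comp (qstar.comp h)).comp q = q := by
      change g.comp (qstar.comp (h.comp q)) = q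
      rw [hcomm, hg]
    exact (ht _ e1).trans (ht (Hom.id I) rfl).symm
  · apply Hom.ext_part
    intro b
    obtain ⟨p, rfl⟩ := hf b
    have e1 : ((qstar.comp h).comp g).comp f = f := by
      change (qstar.comp h).comp (g.comp f) = f
      rw [hg]
      exact hcomm
    exact congrArg (fun k : Hom A B => k.partMap p) e1
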